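/- arXiv:2002.11961 — 2 statements merged into one kernel-verified Lean document; each statement's English description precedes it below -/
import Mathlib

section
/- Let X be a real Banach space, let C ⊆ X be a nonempty weakly closed set, and let A ⊆ X be a nonempty bounded set. Suppose that every minimizing sequence in C for A has a subsequence converging weakly to an element of C. Then: (i) P_C(A) is nonempty and weakly sequentially compact (every sequence in P_C(A) has a subsequence converging weakly to an element of P_C(A)); and (ii) for every neighbourhood V of 0 in the weak topology of X there exists δ > 0 such that P_C(A,δ) ⊆ P_C(A) + V. -/
/-!
The function `simSup A` is weakly sequentially lower semicontinuous: each `‖a - c‖` is attained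
as `f (a - c)` for a functional `f` of norm at most one, and `f` passes to weak limits. Hence the
weak limit of a subsequence of a minimizing sequence is a best simultaneous approximation
(`exists_weakTendsto_simBest`). Applied to a sequence in `P_C(A)` this gives weak sequential
compactness, and applied to any sequence with `n`-th term in `P_C(A, 1 / (n + 1))` it gives
nonemptiness of `P_C(A)`. If the neighbourhood inclusion failed
for `V`, choosing a point of `P_C(A, 1 / (n + 1))` outside `P_C(A) + V` for each `n` would give a
minimizing sequence; along a subsequence it converges weakly to some `c ∈ P_C(A)`, so its terms
eventually lie in `c + V`, a contradiction.
-/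

open Filter Topology Pointwise

variable {X : Type*} [NormedAddCommGroup X] [NormedSpace ℝ X]

/-- `simSup A y = sup_{a ∈ A} ‖a - y‖`. -/
noncomputable def simSup (A : Set X) (y : X) : ℝ := ⨆ a : A, ‖(a : X) - y‖

/-- `simDist A C = inf_{y ∈ C} sup_{a ∈ A} ‖a - y‖`. -/
noncomputable def simDist (A C : Set X) : ℝ := ⨅ y : C, simSup A (y : X)

/-- The set of best simultaneous approximations `P_C(A)`. -/
def simBest (A C : Set X) : Set X := {y | y ∈ C ∧ simSup A y = simDist A C}

/-- The set `P_C(A, δ)`. -/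
def simBestApprox (A C : Set X) (δ : ℝ) : Set X :=
  {y | y ∈ C ∧ simSup A y < simDist A C + δ}

/-- `C` is simultaneously proximinal. -/
def SimProximinal (C : Set X) : Prop :=
  ∀ A : Set X, A.Nonempty → Bornology.IsBounded A → (simBest A C).Nonempty

/-- `y` is a minimizing sequence in `C` for `A`. -/
def IsMinimizing (A C : Set X) (y : ℕ → X) : Prop :=
  (∀ n, y n ∈ C) ∧ Tendsto (fun n => simSup A (y n)) atTop (𝓝 (simDist A C))

/-- Weak convergence of a sequence. -/
def WeakTendsto (y : ℕ → X) (c : X) : Prop :=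
  ∀ f : X →L[ℝ] ℝ, Tendsto (fun n => f (y n)) atTop (𝓝 (f c))

/-- `C` is simultaneously approximatively compact. -/
def SimApproxCompact (C : Set X) : Prop :=
  ∀ A : Set X, A.Nonempty → Bornology.IsBounded A → ∀ y : ℕ → X, IsMinimizing A C y →
    ∃ c ∈ C, ∃ φ : ℕ → ℕ, StrictMono φ ∧ Tendsto (y ∘ φ) atTop (𝓝 c)

/-- `C` is simultaneously approximatively weakly compact. -/
def SimApproxWeakCompact (C : Set X) : Prop :=
  ∀ A : Set X, A.Nonempty → Bornology.IsBounded A → ∀ y : ℕ → X, IsMinimizing A C y →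
    ∃ c ∈ C, ∃ φ : ℕ → ℕ, StrictMono φ ∧ WeakTendsto (y ∘ φ) c

/-- `C` is simultaneously strongly proximinal. -/
def SimStronglyProximinal (C : Set X) : Prop :=
  SimProximinal C ∧ ∀ A : Set X, A.Nonempty → Bornology.IsBounded A → ∀ ε > (0 : ℝ),
    ∃ δ > (0 : ℝ), simBestApprox A C δ ⊆ simBest A C + Metric.closedBall (0 : X) ε

/-- `C` is simultaneously weakly strongly proximinal. -/
def SimWeakStronglyProximinal (C : Set X) : Prop :=
  SimProximinal C ∧ ∀ A : Set X, A.Nonempty → Bornology.IsBounded A →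
    ∀ V : Set X, V ∈ 𝓝 (0 : WeakSpace ℝ X) → ∃ δ > (0 : ℝ),
      simBestApprox A C δ ⊆ simBest A C + V

lemma norm_sub_le_simSup {A : Set X} (hAb : Bornology.IsBounded A) {a : X} (ha : a ∈ A) (y : X) :
    ‖a - y‖ ≤ simSup A y := by
  obtain ⟨R, hR⟩ := hAb.exists_norm_le
  refine le_ciSup (f := fun a : A => ‖(a : X) - y‖) ⟨R + ‖y‖, ?_⟩ ⟨a, ha⟩
  rintro _ ⟨b, rfl⟩
  exact (norm_sub_le _ _).trans (add_le_add (hR b b.2) le_rfl)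

lemma simDist_le_simSup (A : Set X) {C : Set X} {y : X} (hy : y ∈ C) :
    simDist A C ≤ simSup A y := by
  refine ciInf_le (f := fun y : C => simSup A (y : X)) ⟨0, ?_⟩ ⟨y, hy⟩
  rintro _ ⟨b, rfl⟩
  exact Real.iSup_nonneg fun _ => norm_nonneg _

/-- Weak sequential lower semicontinuity of `simSup A`, in the form used below. -/
lemma simSup_le_of_weakTendsto {A : Set X} (hAne : A.Nonempty) (hAb : Bornology.IsBounded A)
    {y : ℕ → X} {c : X} {d : ℝ} (hy : WeakTendsto y c)
    (hd : Tendsto (fun n => simSup A (y n)) atTop (𝓝 d)) : simSup A c ≤ d := by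
  have : Nonempty A := hAne.to_subtype
  refine ciSup_le fun a => ?_
  obtain ⟨f, hf, hfa⟩ := exists_dual_vector'' ℝ ((a : X) - c)
  have hlim : Tendsto (fun n => f (a - y n)) atTop (𝓝 (f (a - c))) := by
    simpa only [map_sub] using (hy f).const_sub (f a)
  have hle : f (a - c) ≤ d := le_of_tendsto_of_tendsto' hlim hd fun n =>
    calc f (a - y n) ≤ ‖f (a - y n)‖ := Real.le_norm_self _
      _ ≤ 1 * ‖(a : X) - y n‖ := f.le_of_opNorm_le hf _
      _ ≤ simSup A (y n) := by simpa using norm_sub_le_simSup hAb a.2 (y n)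
  rw [hfa] at hle
  exact hle

lemma exists_weakTendsto_simBest {A C : Set X} (hAne : A.Nonempty) (hAb : Bornology.IsBounded A)
    (h : ∀ y : ℕ → X, IsMinimizing A C y →
      ∃ c ∈ C, ∃ φ : ℕ → ℕ, StrictMono φ ∧ WeakTendsto (y ∘ φ) c)
    {y : ℕ → X} (hy : IsMinimizing A C y) :
    ∃ c ∈ simBest A C, ∃ φ : ℕ → ℕ, StrictMono φ ∧ WeakTendsto (y ∘ φ) c := by
  obtain ⟨c, hc, φ, hφ, hw⟩ := h y hy
  exact ⟨c, ⟨hc, le_antisymm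
    (simSup_le_of_weakTendsto hAne hAb hw (hy.2.comp hφ.tendsto_atTop))
    (simDist_le_simSup A hc)⟩, φ, hφ, hw⟩

lemma isMinimizing_of_mem_simBestApprox {A C : Set X} {y : ℕ → X}
    (hy : ∀ n : ℕ, y n ∈ simBestApprox A C (1 / ((n : ℝ) + 1))) : IsMinimizing A C y := by
  refine ⟨fun n => (hy n).1, ?_⟩
  refine tendsto_of_tendsto_of_tendsto_of_le_of_le tendsto_const_nhds ?_
    (fun n => simDist_le_simSup A (hy n).1) (fun n => (hy n).2.le)
  simpa using (tendsto_one_div_add_atTop_nhds_zero_nat (𝕜 := ℝ)).const_add (simDist A C)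

lemma WeakTendsto.tendsto_sub_weakSpace {y : ℕ → X} {c : X} (hy : WeakTendsto y c) :
    Tendsto (fun n => (show WeakSpace ℝ X from y n - c)) atTop (𝓝 (0 : WeakSpace ℝ X)) := by
  -- The weak topology is induced by the map `x ↦ (f ↦ f x)` into the product space.
  have hnhds : 𝓝 (0 : WeakSpace ℝ X) =
      comap (fun (x : X) (f : X →L[ℝ] ℝ) => f x) (𝓝 fun f => f 0) :=
    nhds_induced (fun (x : X) (f : X →L[ℝ] ℝ) => f x) 0
  rw [hnhds]
  refine tendsto_comap_iff.2 ?_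
  refine tendsto_pi_nhds.2 fun f => ?_
  change Tendsto (fun n => f (y n - c)) atTop (𝓝 (f (0 : X)))
  simpa using (hy f).sub_const (f c)

/-- If `C` is weakly closed and simultaneously approximatively weakly compact for a bounded
set `A`, then `C` is simultaneously weakly strongly proximinal for `A` and `P_C(A)` is weakly
sequentially compact. -/
theorem simApproxWeakCompact_for_set_implies [CompleteSpace X]
    (C : Set X) (hCne : C.Nonempty)
    (hC : IsClosed (show Set (WeakSpace ℝ X) from C))
    (A : Set X) (hAne : A.Nonempty) (hAb : Bornology.IsBounded A)
    (h : ∀ y : ℕ → X, IsMinimizing A C y →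
      ∃ c ∈ C, ∃ φ : ℕ → ℕ, StrictMono φ ∧ WeakTendsto (y ∘ φ) c) :
    (simBest A C).Nonempty ∧
    (∀ y : ℕ → X, (∀ n, y n ∈ simBest A C) →
      ∃ c ∈ simBest A C, ∃ φ : ℕ → ℕ, StrictMono φ ∧ WeakTendsto (y ∘ φ) c) ∧
    (∀ V : Set X, V ∈ 𝓝 (0 : WeakSpace ℝ X) → ∃ δ > (0 : ℝ),
      simBestApprox A C δ ⊆ simBest A C + V) := by
  have key := fun {y : ℕ → X} => exists_weakTendsto_simBest (y := y) hAne hAb h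
  refine ⟨?_, fun y hy => ?_, fun V hV => ?_⟩
  · have hex : ∀ n : ℕ, ∃ y, y ∈ simBestApprox A C (1 / ((n : ℝ) + 1)) := fun n => by
      have : Nonempty C := hCne.to_subtype
      obtain ⟨y, hy⟩ := exists_lt_of_ciInf_lt (f := fun y : C => simSup A (y : X))
        (lt_add_of_pos_right (simDist A C) (Nat.one_div_pos_of_nat (α := ℝ) (n := n)))
      exact ⟨y, y.2, hy⟩
    choose y hy using hex
    obtain ⟨c, hc, -⟩ := key (isMinimizing_of_mem_simBestApprox hy)
    exact ⟨c, hc⟩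
  · refine key ⟨fun n => (hy n).1, ?_⟩
    simpa only [(hy _).2] using tendsto_const_nhds
  · by_contra! hcon
    have hex : ∀ n : ℕ, ∃ y, y ∈ simBestApprox A C (1 / ((n : ℝ) + 1)) ∧ y ∉ simBest A C + V :=
      fun n => Set.not_subset.1 (hcon _ Nat.one_div_pos_of_nat)
    choose y hy hyV using hex
    obtain ⟨c, hc, φ, -, hw⟩ := key (isMinimizing_of_mem_simBestApprox hy)
    obtain ⟨n, hn⟩ := (hw.tendsto_sub_weakSpace.eventually hV).exists
    exact hyV (φ n) (Set.mem_add.2 ⟨c, hc, y (φ n) - c, hn, add_sub_cancel _ _⟩)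
end

section
/- Let X be a real Banach space and let C, D ⊆ X be nonempty convex sets such that C is compact and D is simultaneously strongly proximinal. Then C + D is simultaneously strongly proximinal. -/
/-!
Fix a nonempty bounded `A`. Since `simSup A (c + y) = simSup (A - c) y`, approximating `A` from
`C + D` amounts to approximating the translates `A - c`, `c ∈ C`, from `D`.

The key fact is `exists_limit_best`: if `c n + y n` is a minimizing sequence for `A` in `C + D`,
then, after passing to a subsequence, `c n → c` in the compact set `C`. As `simSup A` is
1-Lipschitz, `simSup (A - c) (y n)` tends to `d(A, C + D) ≤ d(A - c, D)`, so
`d(A - c, D) = d(A, C + D)` and `y n` is minimizing for `A - c` in `D`. Hence every best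
approximation `p` of `A - c` in `D` yields a best approximation `c + p` of `A` in `C + D`;
strong proximinality of `D` puts `y n` close to such a `p`, and so `c n + y n` close to `c + p`.
-/

open Filter Topology Pointwise

variable {X : Type*} [NormedAddCommGroup X] [NormedSpace ℝ X]

lemma simSup_le_iff {A : Set X} (hne : A.Nonempty) (hb : Bornology.IsBounded A) {y : X} {r : ℝ} :
    simSup A y ≤ r ↔ ∀ a ∈ A, ‖a - y‖ ≤ r := by
  obtain ⟨M, hM⟩ := hb.exists_norm_le
  have : Nonempty A := hne.to_subtype
  have hbdd : BddAbove (Set.range fun a : A => ‖(a : X) - y‖) := by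
    refine ⟨M + ‖y‖, ?_⟩
    rintro _ ⟨a, rfl⟩
    exact (norm_sub_le _ _).trans (by gcongr; exact hM a a.2)
  constructor
  · intro h a ha
    exact (le_ciSup hbdd ⟨a, ha⟩).trans h
  · intro h
    exact ciSup_le fun a => h a a.2

lemma simSup_nonneg (A : Set X) (y : X) : 0 ≤ simSup A y :=
  Real.iSup_nonneg fun _ => norm_nonneg _

lemma simDist_le {A C : Set X} {y : X} (hy : y ∈ C) : simDist A C ≤ simSup A y :=
  ciInf_le (f := fun y : C => simSup A (y : X))
    ⟨0, by rintro _ ⟨z, rfl⟩; exact simSup_nonneg A z⟩ ⟨y, hy⟩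

lemma le_simDist {A C : Set X} (hC : C.Nonempty) {r : ℝ} (h : ∀ y ∈ C, r ≤ simSup A y) :
    r ≤ simDist A C := by
  have : Nonempty C := hC.to_subtype
  exact le_ciInf fun y => h y y.2

lemma simSup_le_add {A : Set X} (hne : A.Nonempty) (hb : Bornology.IsBounded A) (y z : X) :
    simSup A y ≤ simSup A z + ‖z - y‖ := by
  rw [simSup_le_iff hne hb]
  intro a ha
  calc ‖a - y‖ = ‖(a - z) + (z - y)‖ := by congr 1; abel
    _ ≤ ‖a - z‖ + ‖z - y‖ := norm_add_le _ _
    _ ≤ _ := by gcongr; exact (simSup_le_iff hne hb).1 le_rfl a ha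

lemma simSup_translate (A : Set X) (c y : X) :
    simSup ((fun a => a - c) '' A) y = simSup A (c + y) := by
  have hs : ∀ (B : Set X) (z : X), simSup B z = sSup ((fun a => ‖a - z‖) '' B) :=
    fun B z => by rw [Set.image_eq_range]; rfl
  rw [hs, hs, Set.image_image]
  simp only [sub_sub]

lemma exists_mem_simSup_lt {A C : Set X} (hC : C.Nonempty) {r : ℝ} (hr : simDist A C < r) :
    ∃ y ∈ C, simSup A y < r := by
  by_contra! h
  exact absurd (le_simDist hC h) (not_le.2 hr)

/-- Given approximants `c n + y n` whose errors converge to `d(A, C + D)`, with `C` compact, some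
cluster point `c₀` of `c n` satisfies `d(A - c₀, D) = d(A, C + D)`, and there are indices `n` with
`c n` arbitrarily close to `c₀` and `c₀ + y n` arbitrarily close to optimal. -/
lemma exists_limit_best {A C D : Set X} (hne : A.Nonempty) (hb : Bornology.IsBounded A)
    (hC : IsCompact C) {c y : ℕ → X} (hc : ∀ n, c n ∈ C) (hy : ∀ n, y n ∈ D)
    (hlt : ∀ n : ℕ, simSup A (c n + y n) < simDist A (C + D) + 1 / ((n : ℝ) + 1)) :
    ∃ c₀ ∈ C, simDist ((fun a => a - c₀) '' A) D = simDist A (C + D) ∧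
      ∀ η > 0, ∃ n, ‖c n - c₀‖ < η ∧ simSup A (c₀ + y n) < simDist A (C + D) + η := by
  obtain ⟨c₀, hc₀, φ, hφ, hlim⟩ := hC.tendsto_subseq hc
  have key : ∀ η > 0, ∃ n, ‖c n - c₀‖ < η ∧ simSup A (c₀ + y n) < simDist A (C + D) + η := by
    intro η hη
    have h1 : ∀ᶠ n in atTop, ‖c (φ n) - c₀‖ < η / 2 := by
      simpa [dist_eq_norm] using Metric.tendsto_nhds.1 hlim (η / 2) (half_pos hη)
    have h2 : ∀ᶠ n in atTop, 1 / (((φ n : ℕ) : ℝ) + 1) < η / 2 :=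
      (tendsto_one_div_add_atTop_nhds_zero_nat.comp hφ.tendsto_atTop).eventually_lt_const
        (half_pos hη)
    obtain ⟨n, h1, h2⟩ := (h1.and h2).exists
    refine ⟨φ n, by linarith, ?_⟩
    have h3 := simSup_le_add hne hb (c₀ + y (φ n)) (c (φ n) + y (φ n))
    rw [add_sub_add_right_eq_sub] at h3
    linarith [hlt (φ n)]
  refine ⟨c₀, hc₀, le_antisymm ?_ ?_, key⟩
  · refine le_of_forall_pos_le_add fun η hη => ?_
    obtain ⟨n, -, hn⟩ := key η hη
    rw [← simSup_translate] at hn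
    exact (simDist_le (hy n)).trans hn.le
  · refine le_simDist ⟨y 0, hy 0⟩ fun z hz => ?_
    rw [simSup_translate]
    exact simDist_le (Set.add_mem_add hc₀ hz)

lemma add_mem_simBest {A C D : Set X} {c p : X} (hc : c ∈ C)
    (h : simDist ((fun a => a - c) '' A) D = simDist A (C + D))
    (hp : p ∈ simBest ((fun a => a - c) '' A) D) : c + p ∈ simBest A (C + D) :=
  ⟨Set.add_mem_add hc hp.1, by rw [← simSup_translate, hp.2, h]⟩

lemma isBounded_translate {A : Set X} (hb : Bornology.IsBounded A) (c : X) :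
    Bornology.IsBounded ((fun a => a - c) '' A) := by
  obtain ⟨M, hM⟩ := hb.exists_norm_le
  refine isBounded_iff_forall_norm_le.2 ⟨M + ‖c‖, ?_⟩
  rintro _ ⟨a, ha, rfl⟩
  exact (norm_sub_le _ _).trans (by gcongr; exact hM a ha)

/-- The sum of a compact convex set and a simultaneously strongly proximinal convex set is
simultaneously strongly proximinal. -/
theorem compact_add_simStronglyProximinal [CompleteSpace X]
    (C D : Set X) (hCne : C.Nonempty) (hDne : D.Nonempty)
    (hCc : Convex ℝ C) (hDc : Convex ℝ D)
    (hC : IsCompact C) (hD : SimStronglyProximinal D) :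
    SimStronglyProximinal (C + D) := by
  constructor
  · intro A hne hb
    have hex : ∀ n : ℕ, ∃ c ∈ C, ∃ y ∈ D,
        simSup A (c + y) < simDist A (C + D) + 1 / ((n : ℝ) + 1) := by
      intro n
      obtain ⟨_, ⟨c, hc, y, hy, rfl⟩, h⟩ := exists_mem_simSup_lt (A := A) (hCne.add hDne)
        (lt_add_of_pos_right (simDist A (C + D)) (Nat.one_div_pos_of_nat (α := ℝ) (n := n)))
      exact ⟨c, hc, y, hy, h⟩
    choose c hc y hy hlt using hex
    obtain ⟨c₀, hc₀, heq, -⟩ := exists_limit_best hne hb hC hc hy hlt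
    obtain ⟨p, hp⟩ := hD.1 _ (hne.image _) (isBounded_translate hb c₀)
    exact ⟨c₀ + p, add_mem_simBest hc₀ heq hp⟩
  · intro A hne hb ε hε
    by_contra! hcon
    have hex : ∀ n : ℕ, ∃ c ∈ C, ∃ y ∈ D,
        simSup A (c + y) < simDist A (C + D) + 1 / ((n : ℝ) + 1) ∧
        c + y ∉ simBest A (C + D) + Metric.closedBall (0 : X) ε := by
      intro n
      obtain ⟨_, ⟨⟨c, hc, y, hy, rfl⟩, h⟩, h'⟩ :=
        Set.not_subset.1 (hcon _ (Nat.one_div_pos_of_nat (α := ℝ) (n := n)))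
      exact ⟨c, hc, y, hy, h, h'⟩
    choose c hc y hy hlt hnot using hex
    obtain ⟨c₀, hc₀, heq, hclose⟩ := exists_limit_best hne hb hC hc hy hlt
    obtain ⟨δ, hδ, hsub⟩ :=
      hD.2 _ (hne.image _) (isBounded_translate hb c₀) (ε / 2) (half_pos hε)
    obtain ⟨n, hn, hsup⟩ := hclose (min δ (ε / 2)) (lt_min hδ (half_pos hε))
    have hmem : y n ∈ simBestApprox ((fun a => a - c₀) '' A) D δ := by
      refine ⟨hy n, ?_⟩
      rw [simSup_translate, heq]
      linarith [min_le_left δ (ε / 2)]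
    obtain ⟨p, hp, e, he, hpe⟩ := hsub hmem
    refine hnot n ⟨c₀ + p, add_mem_simBest hc₀ heq hp, (c n - c₀) + e, ?_, ?_⟩
    · rw [mem_closedBall_zero_iff] at he ⊢
      linarith [norm_add_le (c n - c₀) e, min_le_right δ (ε / 2)]
    · simp only at hpe ⊢
      rw [← hpe]
      abel
end
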